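/- For all α, β ∈ B_3^{+*}: α <_D β holds if and only if C(α) <_left C(β), where C(α) and C(β) denote the <_right-greatest codes of α and β respectively (which exist). -/

import Mathlib

/-- The defining relations of the braid group on `n` strands, inside the free group on
generators indexed by `ℕ`.  Generator `i` corresponds to the Artin generator `σ_i`
(for `1 ≤ i ≤ n-1`); generators with index `0` or `≥ n` are killed. -/
def braidRels (n : ℕ) : Set (FreeGroup ℕ) :=
  {r | (∃ i j : ℕ, 1 ≤ i ∧ i + 2 ≤ j ∧ j ≤ n - 1 ∧
          r = FreeGroup.of i * FreeGroup.of j * (FreeGroup.of i)⁻¹ * (FreeGroup.of j)⁻¹) ∨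
       (∃ i : ℕ, 1 ≤ i ∧ i + 1 ≤ n - 1 ∧
          r = FreeGroup.of i * FreeGroup.of (i+1) * FreeGroup.of i *
              (FreeGroup.of (i+1) * FreeGroup.of i * FreeGroup.of (i+1))⁻¹) ∨
       (∃ i : ℕ, (i = 0 ∨ n ≤ i) ∧ r = FreeGroup.of i)}

/-- The braid group `B_n` on `n` strands. -/
abbrev Braid (n : ℕ) := PresentedGroup (braidRels n)

/-- The Artin generator `σ_i` of `B_n`. -/
def genσ (n i : ℕ) : Braid n := PresentedGroup.of i

/-- The band generator `a_{i,j} = (σ_{j-1} ⋯ σ_{i+1}) σ_i (σ_{i+1}⁻¹ ⋯ σ_{j-1}⁻¹)`. -/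
def band (n i j : ℕ) : Braid n :=
  (((List.range' (i+1) (j-1-i)).reverse.map (genσ n)).prod) * genσ n i *
    (((List.range' (i+1) (j-1-i)).reverse.map (genσ n)).prod)⁻¹

/-- The dual braid monoid `B_n^{+*}`: the submonoid of `B_n` generated by the band
generators `a_{i,j}`, `1 ≤ i < j ≤ n`. -/
def dualMonoid (n : ℕ) : Submonoid (Braid n) :=
  Submonoid.closure {x | ∃ i j : ℕ, 1 ≤ i ∧ i < j ∧ j ≤ n ∧ x = band n i j}

/-- The submonoid `B_I^{+*}` generated by the band generators `a_{i,j}` with `i, j ∈ I`. -/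
def dualMonoidOn (n : ℕ) (I : Set ℕ) : Submonoid (Braid n) :=
  Submonoid.closure {x | ∃ i j : ℕ, i ∈ I ∧ j ∈ I ∧ 1 ≤ i ∧ i < j ∧ j ≤ n ∧ x = band n i j}

/-- Evaluation of a word in the letters `σ_i^{±1}` (a letter is a pair of an index and a
sign, `true` meaning positive). -/
def evalWord (n : ℕ) (w : List (ℕ × Bool)) : Braid n :=
  (w.map (fun p => if p.2 then genσ n p.1 else (genσ n p.1)⁻¹)).prod

/-- `γ` is `σ_i`-positive: it is represented by a word in the letters `σ_1^{±1}, …,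
σ_{n-1}^{±1}` containing at least one `σ_i`, no `σ_i⁻¹`, and no `σ_j^{±1}` with `j < i`. -/
def SigmaPositive (n i : ℕ) (γ : Braid n) : Prop :=
  ∃ w : List (ℕ × Bool),
    (∀ p ∈ w, 1 ≤ p.1 ∧ p.1 ≤ n - 1) ∧
    (i, true) ∈ w ∧ (i, false) ∉ w ∧
    (∀ p ∈ w, i ≤ p.1) ∧
    evalWord n w = γ

/-- The Dehornoy ordering on `B_n`: `α <_D β` iff `α⁻¹β` is `σ_i`-positive for some `i`. -/
def dehornoyLt (n : ℕ) (α β : Braid n) : Prop :=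
  ∃ i : ℕ, 1 ≤ i ∧ i ≤ n - 1 ∧ SigmaPositive n i (α⁻¹ * β)

/-- For `t ≥ -1`: `g_t = a_{1,2}` if `t ≡ 0 (mod 3)`, `g_t = a_{1,3}` if `t ≡ 1`,
and `g_t = a_{2,3}` if `t ≡ 2`. -/
def g3 (t : ℤ) : Braid 3 :=
  if t % 3 = 0 then band 3 1 2 else if t % 3 = 1 then band 3 1 3 else band 3 2 3

/-- The product `g_t^{c_t} g_{t-1}^{c_{t-1}} ⋯ g_0^{c_0} g_{-1}^{c_{-1}}` (for `t ≥ -1`). -/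
def tailProd3 (c : ℤ → ℕ) (t : ℤ) : Braid 3 :=
  ((List.range (t + 2).toNat).map (fun k => g3 (t - k) ^ c (t - k))).prod

/-- `c` is a code of `β ∈ B_3^{+*}`: `c` vanishes below `-1`, and for some `m` with
`c_t = 0` for all `t > m` one has `β = g_m^{c_m} ⋯ g_{-1}^{c_{-1}}`. -/
def IsCode3 (β : Braid 3) (c : ℤ → ℕ) : Prop :=
  (∀ t : ℤ, t < -1 → c t = 0) ∧
  ∃ m : ℕ, (∀ t : ℤ, (m : ℤ) < t → c t = 0) ∧ β = tailProd3 c (m : ℤ)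

/-- `c <_left c'`: at the largest index `l` where they differ, `c_l < c'_l`. -/
def codeLtLeft (c c' : ℤ → ℕ) : Prop :=
  ∃ l : ℤ, c l < c' l ∧ ∀ t : ℤ, l < t → c t = c' t

/-- `c <_right c'`: at the smallest index `l` where they differ, `c_l < c'_l`. -/
def codeLtRight (c c' : ℤ → ℕ) : Prop :=
  ∃ l : ℤ, c l < c' l ∧ ∀ t : ℤ, t < l → c t = c' t

/-- `c` is the `<_right`-greatest code of `β`. -/
def IsGreatestCode3 (β : Braid 3) (c : ℤ → ℕ) : Prop :=
  IsCode3 β c ∧ ∀ c' : ℤ → ℕ, IsCode3 β c' → c' ≠ c → codeLtRight c' c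

/-!
Put `δ = σ_2 σ_1`. Then `g_t g_{t+1} = δ` and `g_t = δ^t σ_1 δ^{-t}` for all `t`, and rewriting a
product of the `g_t` through powers of `δ` leaves only `σ_1` and `σ_2^{±1}`. If `c` and `d` differ
last at an index `l ≥ 1`, where `c_l < d_l`, put `P_c = g_{l-1}^{c_{l-1}} ⋯ g_{-1}^{c_{-1}}`, and
`P_d` likewise. The braids to be compared have quotient `P_c^{-1} g_l^{d_l - c_l} P_d`, which is
the product of `P_c^{-1} δ^l`, of `δ^{-l} g_l^{d_l - c_l} δ^{l-1} = σ_1^{d_l - c_l - 1} σ_2^{-1}`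
and of `δ^{-(l-1)} P_d`. The first factor is always `σ_1`-positive; the last contains no `σ_1^{-1}`
provided `d` has no gaps. A `<_right`-greatest code has none, because a zero entry at `t` below
a nonzero one lets a letter `g_{t+1} = g_{t-2}` slide down three places, which increases the code
for `<_right`.

Since `<_left` is total on codes, the converse only needs `<_D` to be asymmetric. This
follows from an order-preserving action of `B_3` on `ℚ` in which `σ_2` fixes `0` and `σ_1` moves
it up.
-/

open Filter

section SigmaPositive

variable {n i j : ℕ} {β γ : Braid n}

/-- The letter `p` (encoded as in `evalWord`) may occur in a weakly `σ_i`-positive word: it is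
`σ_i` or some `σ_j^{±1}` with `i < j ≤ n - 1`. -/
def IsNonnegLetter (n i : ℕ) (p : ℕ × Bool) : Prop :=
  (1 ≤ p.1 ∧ p.1 ≤ n - 1) ∧ p ≠ (i, false) ∧ i ≤ p.1

/-- The submonoid of weakly `σ_i`-positive braids: those represented by a word in the letters
`σ_j^{±1}` with `i ≤ j`, in which `σ_i⁻¹` does not occur. -/
def sigmaNonneg (n i : ℕ) : Submonoid (Braid n) where
  carrier := {γ | ∃ w : List (ℕ × Bool),
    (∀ p ∈ w, IsNonnegLetter n i p) ∧ evalWord n w = γ}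
  one_mem' := ⟨[], by simp, rfl⟩
  mul_mem' := by
    rintro _ _ ⟨v, hv, rfl⟩ ⟨w, hw, rfl⟩
    exact ⟨v ++ w, List.forall_mem_append.mpr ⟨hv, hw⟩, by simp [evalWord]⟩

lemma genσ_mem_sigmaNonneg (hj : 1 ≤ j) (hjn : j ≤ n - 1) (hij : i ≤ j) :
    genσ n j ∈ sigmaNonneg n i :=
  ⟨[(j, true)], List.forall_mem_singleton.mpr ⟨⟨hj, hjn⟩, by simp, hij⟩, by simp [evalWord]⟩

lemma inv_genσ_mem_sigmaNonneg (hjn : j ≤ n - 1) (hij : i < j) :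
    (genσ n j)⁻¹ ∈ sigmaNonneg n i :=
  ⟨[(j, false)], List.forall_mem_singleton.mpr
    ⟨⟨Nat.one_le_of_lt hij, hjn⟩, by simp [hij.ne'], hij.le⟩, by simp [evalWord]⟩

lemma sigmaNonneg_antitone (n : ℕ) : Antitone (sigmaNonneg n) := by
  rintro i j hij _ ⟨w, hw, rfl⟩
  refine ⟨w, fun p hp ↦ ?_, rfl⟩
  obtain ⟨hpn, hne, hjp⟩ := hw p hp
  refine ⟨hpn, ?_, hij.trans hjp⟩
  rintro rfl
  exact hne (by rw [le_antisymm hij hjp])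

lemma sigmaPositive_iff_exists : SigmaPositive n i γ ↔ (1 ≤ i ∧ i ≤ n - 1) ∧
    ∃ x ∈ sigmaNonneg n i, ∃ y ∈ sigmaNonneg n i, x * genσ n i * y = γ := by
  constructor
  · rintro ⟨w, hwn, hpos, hneg, hle, rfl⟩
    have hw : ∀ p ∈ w, IsNonnegLetter n i p :=
      fun p hp ↦ ⟨hwn p hp, ne_of_mem_of_not_mem hp hneg, hle p hp⟩
    obtain ⟨u, v, rfl⟩ := List.append_of_mem hpos
    simp only [List.forall_mem_append, List.forall_mem_cons] at hw
    exact ⟨hwn _ hpos, _, ⟨u, hw.1, rfl⟩, _, ⟨v, hw.2.2, rfl⟩, by simp [evalWord, mul_assoc]⟩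
  · rintro ⟨hi, _, ⟨u, hu, rfl⟩, _, ⟨v, hv, rfl⟩, rfl⟩
    have hw : ∀ p ∈ u ++ (i, true) :: v, IsNonnegLetter n i p := by
      simpa only [List.forall_mem_append, List.forall_mem_cons] using
        ⟨hu, ⟨hi, by simp, le_rfl⟩, hv⟩
    exact ⟨_, fun p hp ↦ (hw p hp).1, by simp, fun h ↦ (hw _ h).2.1 rfl,
      fun p hp ↦ (hw p hp).2.2, by simp [evalWord, mul_assoc]⟩

lemma sigmaPositive_genσ (hi : 1 ≤ i) (hin : i ≤ n - 1) : SigmaPositive n i (genσ n i) :=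
  sigmaPositive_iff_exists.mpr ⟨⟨hi, hin⟩, 1, one_mem _, 1, one_mem _, by simp⟩

namespace SigmaPositive

lemma mul_mem (hβ : SigmaPositive n i β) (hγ : γ ∈ sigmaNonneg n i) :
    SigmaPositive n i (β * γ) := by
  obtain ⟨hi, x, hx, y, hy, rfl⟩ := sigmaPositive_iff_exists.mp hβ
  exact sigmaPositive_iff_exists.mpr ⟨hi, x, hx, y * γ, Submonoid.mul_mem _ hy hγ, by group⟩

lemma mem_mul (hβ : β ∈ sigmaNonneg n i) (hγ : SigmaPositive n i γ) :
    SigmaPositive n i (β * γ) := by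
  obtain ⟨hi, x, hx, y, hy, rfl⟩ := sigmaPositive_iff_exists.mp hγ
  exact sigmaPositive_iff_exists.mpr ⟨hi, β * x, Submonoid.mul_mem _ hβ hx, y, hy, by group⟩

lemma mem_sigmaNonneg (h : SigmaPositive n i γ) : γ ∈ sigmaNonneg n i := by
  obtain ⟨⟨hi, hin⟩, x, hx, y, hy, rfl⟩ := sigmaPositive_iff_exists.mp h
  exact Submonoid.mul_mem _ (Submonoid.mul_mem _ hx (genσ_mem_sigmaNonneg hi hin le_rfl)) hy

end SigmaPositive

lemma dehornoyLt_trans {α : Braid n} (hαβ : dehornoyLt n α β) (hβγ : dehornoyLt n β γ) :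
    dehornoyLt n α γ := by
  obtain ⟨i, hi, hin, hi_pos⟩ := hαβ
  obtain ⟨j, hj, hjn, hj_pos⟩ := hβγ
  have hmul : α⁻¹ * γ = α⁻¹ * β * (β⁻¹ * γ) := by group
  rcases le_total i j with hij | hji
  · exact ⟨i, hi, hin, hmul ▸ hi_pos.mul_mem (sigmaNonneg_antitone n hij hj_pos.mem_sigmaNonneg)⟩
  · exact ⟨j, hj, hjn, hmul ▸ hj_pos.mem_mul (sigmaNonneg_antitone n hji hi_pos.mem_sigmaNonneg)⟩

variable {X : Type*} [Preorder X] {x : X} (φ : Braid n →* (X ≃o X))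

lemma le_apply_of_mem_sigmaNonneg (hfix : ∀ j, i < j → j ≤ n - 1 → φ (genσ n j) x = x)
    (hlt : x < φ (genσ n i) x) (hγ : γ ∈ sigmaNonneg n i) : x ≤ φ γ x := by
  have hletter (p : ℕ × Bool) (hp : IsNonnegLetter n i p) :
      x ≤ φ (if p.2 then genσ n p.1 else (genσ n p.1)⁻¹) x := by
    obtain ⟨j, s⟩ := p
    obtain ⟨⟨-, hjn⟩, hne, hij : i ≤ j⟩ := hp
    rcases hij.eq_or_lt with rfl | hij
    · obtain rfl : s = true := by simpa using hne
      exact hlt.le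
    · have hj : φ (genσ n j) x = x := hfix j hij hjn
      have hj_inv : φ (genσ n j)⁻¹ x = x := by
        nth_rw 1 [← hj, ← RelIso.mul_apply, ← map_mul, inv_mul_cancel, map_one, RelIso.one_apply]
      cases s
      exacts [hj_inv.ge, hj.ge]
  obtain ⟨w, hw, rfl⟩ := hγ
  induction w with
  | nil => simp [evalWord]
  | cons p w ih =>
    obtain ⟨hp, hw⟩ := List.forall_mem_cons.mp hw
    calc x ≤ φ _ x := hletter p hp
      _ ≤ φ _ (φ (evalWord n w) x) := (φ _).monotone (ih hw)
      _ = φ (evalWord n (p :: w)) x := by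
        rw [← RelIso.mul_apply, ← map_mul, evalWord, evalWord, List.map_cons, List.prod_cons]

lemma SigmaPositive.lt_apply (hfix : ∀ j, i < j → j ≤ n - 1 → φ (genσ n j) x = x)
    (hlt : x < φ (genσ n i) x) (hγ : SigmaPositive n i γ) : x < φ γ x := by
  obtain ⟨-, y, hy, z, hz, rfl⟩ := sigmaPositive_iff_exists.mp hγ
  simp only [map_mul, RelIso.mul_apply]
  calc x ≤ φ y x := le_apply_of_mem_sigmaNonneg φ hfix hlt hy
    _ < φ y (φ (genσ n i) x) := (φ y).strictMono hlt
    _ ≤ φ y (φ (genσ n i) (φ z x)) :=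
      (φ y).monotone ((φ _).monotone (le_apply_of_mem_sigmaNonneg φ hfix hlt hz))

end SigmaPositive

section Action

/-- The increasing map that commutes with `x ↦ x + 1`, has slope `2` on `[0, 1/3]` and slope `1/2`
on `[1/3, 1]`. Its breakpoints are chosen so that `twist_mul_translation_mul_twist` holds. -/
def twistFun (x : ℚ) : ℚ := ⌊x⌋ + min (2 * Int.fract x) ((Int.fract x + 1) / 2)

lemma twistFun_add_one (x : ℚ) : twistFun (x + 1) = twistFun x + 1 := by
  simp only [twistFun, Int.floor_add_one, Int.fract_add_one, Int.cast_add, Int.cast_one]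
  ring

lemma twistFun_of_le {x : ℚ} {k : ℤ} (hk : k ≤ x) (hx : x ≤ k + 1 / 3) :
    twistFun x = 2 * x - k := by
  have hfloor : ⌊x⌋ = k := Int.floor_eq_iff.mpr ⟨hk, by linarith⟩
  rw [twistFun, ← Int.self_sub_floor, hfloor, min_eq_left (by linarith)]
  ring

lemma twistFun_of_ge {x : ℚ} {k : ℤ} (hx : k + 1 / 3 ≤ x) (hk : x < k + 1) :
    twistFun x = (x + k + 1) / 2 := by
  have hfloor : ⌊x⌋ = k := Int.floor_eq_iff.mpr ⟨by linarith, hk⟩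
  rw [twistFun, ← Int.self_sub_floor, hfloor, min_eq_right (by linarith)]
  ring

lemma twistFun_strictMono : StrictMono twistFun := by
  intro x y hxy
  have hx := Int.self_sub_floor x
  have hy := Int.self_sub_floor y
  have hy0 := Int.fract_nonneg y
  have hx1 := Int.fract_lt_one x
  rcases (Int.floor_mono hxy.le).eq_or_lt with h | h
  · rw [twistFun, twistFun, h]
    rw [h] at hx
    have hfract : Int.fract x < Int.fract y := by linarith
    exact add_lt_add_right (min_lt_min (by gcongr) (by gcongr)) _
  · have h' : (⌊x⌋ : ℚ) + 1 ≤ ⌊y⌋ := by exact_mod_cast h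
    calc twistFun x ≤ ⌊x⌋ + (Int.fract x + 1) / 2 := add_le_add_right (min_le_right _ _) _
      _ < ⌊y⌋ := by linarith
      _ ≤ twistFun y := le_add_of_nonneg_right (le_min (by linarith) (by linarith))

lemma twistFun_twistFun_add (x : ℚ) : twistFun (twistFun x + 1 / 3) = x + 2 / 3 := by
  have hk := Int.floor_le x
  have hk' := Int.lt_floor_add_one x
  rcases lt_or_ge x (⌊x⌋ + 1 / 3) with hx | hx
  · rw [twistFun_of_le hk hx.le, twistFun_of_ge (k := ⌊x⌋) (by linarith) (by linarith)]
    ring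
  · rw [twistFun_of_ge hx hk', twistFun_of_le (k := ⌊x⌋ + 1) (by push_cast; linarith)
      (by push_cast; linarith)]
    push_cast
    ring

/-- The automorphism of the ordered set `ℚ` by which `σ_2` acts; it fixes `0`. -/
def twist : ℚ ≃o ℚ :=
  twistFun_strictMono.orderIsoOfRightInverse _ (fun x ↦ twistFun (x + 1 / 3) - 2 / 3) fun x ↦ by
    calc twistFun (twistFun (x + 1 / 3) - 2 / 3)
        = twistFun (twistFun (x + 1 / 3) - 2 / 3 + 1) - 1 := by
          rw [twistFun_add_one, add_sub_cancel_right]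
      _ = twistFun (twistFun (x + 1 / 3) + 1 / 3) - 1 := by ring_nf
      _ = x := by rw [twistFun_twistFun_add]; ring

lemma twist_apply (x : ℚ) : twist x = twistFun x := rfl

/-- The automorphism `x ↦ x + 1/3` of `ℚ`, by which `σ_2 σ_1` acts. -/
def translation : ℚ ≃o ℚ := OrderIso.addRight (1 / 3)

lemma translation_apply (x : ℚ) : translation x = x + 1 / 3 := rfl

lemma twist_mul_translation_mul_twist : twist * translation * twist = translation ^ 2 := by
  ext x
  simp only [pow_two, RelIso.mul_apply, twist_apply, translation_apply, twistFun_twistFun_add]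
  ring

/-- The automorphism of `ℚ` by which `σ_i` acts, trivial for the indices `i` that `braidRels 3`
kills. -/
def sigmaAut (i : ℕ) : ℚ ≃o ℚ :=
  if i = 1 then translation * twist * translation⁻¹ else if i = 2 then twist else 1

lemma sigmaAut_braid_rel :
    sigmaAut 1 * sigmaAut 2 * sigmaAut 1 = sigmaAut 2 * sigmaAut 1 * sigmaAut 2 := by
  change translation * twist * translation⁻¹ * twist * (translation * twist * translation⁻¹) =
    twist * (translation * twist * translation⁻¹) * twist
  calc _ = translation * twist * translation⁻¹ * (twist * translation * twist) * translation⁻¹ := by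
        group
    _ = twist * translation * twist * translation⁻¹ * twist := by
        rw [twist_mul_translation_mul_twist]; group
    _ = _ := by group

lemma lift_sigmaAut_eq_one : ∀ r ∈ braidRels 3, FreeGroup.lift sigmaAut r = 1 := by
  rintro r (⟨i, j, hi, hij, hj, rfl⟩ | ⟨i, hi, hin, rfl⟩ | ⟨i, hi, rfl⟩)
  · omega
  · obtain rfl : i = 1 := by omega
    simp only [map_mul, map_inv, FreeGroup.lift_apply_of, mul_inv_eq_one, one_add_one_eq_two,
      sigmaAut_braid_rel]
  · have h1 : i ≠ 1 := by omega
    have h2 : i ≠ 2 := by omega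
    simp [sigmaAut, h1, h2]

/-- An order-preserving action of `B_3` on `ℚ`. For each `i` some point is moved up by `σ_i` and
fixed by every `σ_j` with `j > i`, so no `σ_i`-positive braid acts trivially. -/
def braidAction : Braid 3 →* (ℚ ≃o ℚ) := PresentedGroup.toGroup lift_sigmaAut_eq_one

lemma braidAction_genσ (i : ℕ) : braidAction (genσ 3 i) = sigmaAut i :=
  PresentedGroup.toGroup.of lift_sigmaAut_eq_one

lemma not_sigmaPositive_one (i : ℕ) : ¬ SigmaPositive 3 i 1 := by
  intro h
  obtain ⟨⟨hi, hin⟩, -⟩ := sigmaPositive_iff_exists.mp h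
  suffices ∃ x : ℚ, (∀ j, i < j → j ≤ 3 - 1 → braidAction (genσ 3 j) x = x) ∧
      x < braidAction (genσ 3 i) x by
    obtain ⟨x, hfix, hlt⟩ := this
    simpa using h.lt_apply braidAction hfix hlt
  simp only [braidAction_genσ]
  obtain rfl | rfl : i = 1 ∨ i = 2 := by omega
  · refine ⟨0, fun j hj hjn ↦ ?_, ?_⟩
    · obtain rfl : j = 2 := by omega
      change twistFun 0 = 0
      norm_num [twistFun]
    · change 0 < twistFun (0 + -(1 / 3)) + 1 / 3
      norm_num [twistFun]
  · refine ⟨1 / 3, fun j hj hjn ↦ by omega, ?_⟩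
    change 1 / 3 < twistFun (1 / 3)
    norm_num [twistFun]

lemma dehornoyLt_asymm {α β : Braid 3} (hαβ : dehornoyLt 3 α β) : ¬ dehornoyLt 3 β α := by
  intro hβα
  obtain ⟨i, -, -, hi⟩ := dehornoyLt_trans hαβ hβα
  exact not_sigmaPositive_one i (by simpa using hi)

end Action

local notation "σ₁" => genσ 3 1

local notation "σ₂" => genσ 3 2

section Band

/-- The Garside element `δ = σ_2 σ_1` of the dual braid monoid `B_3^{+*}`. -/
def δ₃ : Braid 3 := σ₂ * σ₁

lemma genσ_braid_rel : σ₁ * σ₂ * σ₁ = σ₂ * σ₁ * σ₂ := by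
  have hmem : (FreeGroup.of 1 * FreeGroup.of (1 + 1) * FreeGroup.of 1 *
      (FreeGroup.of (1 + 1) * FreeGroup.of 1 * FreeGroup.of (1 + 1))⁻¹ : FreeGroup ℕ) ∈
      braidRels 3 := .inr (.inl ⟨1, le_rfl, by norm_num, rfl⟩)
  have h := PresentedGroup.one_of_mem hmem
  simp only [map_mul, map_inv] at h
  exact mul_inv_eq_one.mp h

lemma g3_of_emod_eq_zero {t : ℤ} (ht : t % 3 = 0) : g3 t = σ₁ := by simp [g3, ht, band]

lemma g3_of_emod_eq_one {t : ℤ} (ht : t % 3 = 1) : g3 t = σ₂ * σ₁ * σ₂⁻¹ := by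
  simp [g3, ht, band]

lemma g3_of_emod_eq_two {t : ℤ} (ht : t % 3 = 2) : g3 t = σ₂ := by simp [g3, ht, band]

lemma g3_add_three (t : ℤ) : g3 (t + 3) = g3 t := by simp [g3]

lemma g3_mul_g3_add_one (t : ℤ) : g3 t * g3 (t + 1) = δ₃ := by
  obtain ht | ht | ht : t % 3 = 0 ∨ t % 3 = 1 ∨ t % 3 = 2 := by omega
  · rw [g3_of_emod_eq_zero ht, g3_of_emod_eq_one (by omega), δ₃, ← mul_assoc, ← mul_assoc,
      genσ_braid_rel, mul_inv_cancel_right]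
  · rw [g3_of_emod_eq_one ht, g3_of_emod_eq_two (by omega), δ₃]
    group
  · rw [g3_of_emod_eq_two ht, g3_of_emod_eq_zero (by omega), δ₃]

lemma g3_add_two_mul_g3 (t : ℤ) : g3 (t + 2) * g3 t = g3 (t + 1) * g3 (t + 2) := by
  rw [← g3_add_three t, show t + 3 = t + 2 + 1 by ring, show t + 2 = t + 1 + 1 by ring,
    g3_mul_g3_add_one, g3_mul_g3_add_one]

lemma semiconjBy_δ₃_g3 (t : ℤ) : SemiconjBy δ₃ (g3 t) (g3 (t + 1)) := by
  unfold SemiconjBy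
  rw [← g3_mul_g3_add_one (t + 1), mul_assoc, add_assoc, one_add_one_eq_two, g3_add_two_mul_g3]

lemma semiconjBy_δ₃_zpow_g3 (s t : ℤ) : SemiconjBy (δ₃ ^ s) (g3 t) (g3 (t + s)) := by
  induction s generalizing t with
  | zero => simp
  | succ s ih =>
    rw [add_comm (s : ℤ), ← add_assoc, add_comm 1 (s : ℤ), zpow_add_one]
    exact (ih (t + 1)).mul_left (semiconjBy_δ₃_g3 t)
  | pred s ih =>
    rw [zpow_sub_one]
    have hinv : SemiconjBy δ₃⁻¹ (g3 t) (g3 (t - 1)) := by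
      simpa using (semiconjBy_δ₃_g3 (t - 1)).inv_symm_left
    rw [show t + (-s - 1) = t - 1 + -s by ring]
    exact (ih (t - 1)).mul_left hinv

lemma g3_pow_eq_conj_σ₁ (t : ℤ) (k : ℕ) : g3 t ^ k = δ₃ ^ t * σ₁ ^ k * (δ₃ ^ t)⁻¹ := by
  have h := (semiconjBy_δ₃_zpow_g3 t 0).pow_right k
  rw [zero_add, g3_of_emod_eq_zero rfl] at h
  exact eq_mul_inv_of_mul_eq h.eq.symm

lemma g3_pow_eq_conj_σ₂ (t : ℤ) (k : ℕ) :
    g3 t ^ k = δ₃ ^ (t + 1) * σ₂ ^ k * (δ₃ ^ (t + 1))⁻¹ := by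
  have h := (semiconjBy_δ₃_zpow_g3 (t + 1) (-1)).pow_right k
  rw [neg_add_cancel_comm_assoc, g3_of_emod_eq_two rfl] at h
  exact eq_mul_inv_of_mul_eq h.eq.symm

lemma g3_pow_succ_eq (t : ℤ) (k : ℕ) :
    g3 t ^ (k + 1) = δ₃ ^ t * (σ₁ ^ k * σ₂⁻¹) * (δ₃ ^ (t - 1))⁻¹ := by
  have hδ₃ : σ₁ * δ₃⁻¹ = σ₂⁻¹ := by rw [δ₃, mul_inv_rev, mul_inv_cancel_left]
  rw [g3_pow_eq_conj_σ₁, ← hδ₃, zpow_sub_one, pow_succ]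
  group

end Band

section TailProd

variable {c d : ℤ → ℕ} {t : ℤ}

lemma tailProd3_eq_prod_map (c : ℤ → ℕ) (t : ℤ) : tailProd3 c t =
    ((List.range (t + 2).toNat).map fun k : ℕ ↦ g3 (t - k) ^ c (t - k)).prod := by
  simp [tailProd3, ← List.map_eq_flatMap, Function.comp_def]

lemma tailProd3_zero (t : ℤ) : tailProd3 0 t = 1 := by simp [tailProd3_eq_prod_map]

lemma tailProd3_of_lt (c : ℤ → ℕ) (ht : t < -1) : tailProd3 c t = 1 := by
  simp [tailProd3_eq_prod_map, show (t + 2).toNat = 0 by omega]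

lemma tailProd3_eq_mul (c : ℤ → ℕ) (ht : -1 ≤ t) :
    tailProd3 c t = g3 t ^ c t * tailProd3 c (t - 1) := by
  have hlen : (t + 2).toNat = (t - 1 + 2).toNat + 1 := by omega
  simp [tailProd3_eq_prod_map, hlen, List.range_succ_eq_map, Function.comp_def, sub_sub, add_comm]

lemma tailProd3_neg_one (c : ℤ → ℕ) : tailProd3 c (-1) = σ₂ ^ c (-1) := by
  rw [tailProd3_eq_mul c le_rfl, tailProd3_of_lt c (by norm_num), mul_one,
    g3_of_emod_eq_two (by norm_num)]

lemma tailProd3_congr (h : ∀ s ≤ t, c s = d s) : tailProd3 c t = tailProd3 d t := by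
  simp only [tailProd3_eq_prod_map]
  congr 1
  refine List.map_congr_left fun k _ ↦ ?_
  rw [h _ (by omega)]

lemma inv_tailProd3_mul_tailProd3_of_eq_above {l : ℤ} (h : ∀ s, l < s → c s = d s) (ht : l ≤ t) :
    (tailProd3 c t)⁻¹ * tailProd3 d t = (tailProd3 c l)⁻¹ * tailProd3 d l := by
  induction t, ht using Int.leInduction with
  | base => rfl
  | succ t ht ih =>
    rw [← ih]
    rcases lt_or_ge (t + 1) (-1) with hneg | hneg
    · simp [tailProd3_of_lt, hneg, (lt_add_one t).trans hneg]
    · rw [tailProd3_eq_mul c hneg, tailProd3_eq_mul d hneg, h _ (by omega), add_sub_cancel_right]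
      group

lemma isCode3_iff_eventually {β : Braid 3} : IsCode3 β c ↔ (∀ t < -1, c t = 0) ∧
    ∀ᶠ t in atTop, (∀ s, t < s → c s = 0) ∧ β = tailProd3 c t := by
  refine and_congr_right fun _ ↦ ⟨?_, fun h ↦ ?_⟩
  · rintro ⟨m, hm, rfl⟩
    filter_upwards [eventually_ge_atTop (m : ℤ)] with t ht
    refine ⟨fun s hs ↦ hm s (ht.trans_lt hs), ?_⟩
    simpa only [tailProd3_zero, inv_one, one_mul] using
      (inv_tailProd3_mul_tailProd3_of_eq_above (c := 0) (fun s hs ↦ (hm s hs).symm) ht).symm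
  · obtain ⟨t, ⟨hzero, hβ⟩, ht⟩ := (h.and (eventually_ge_atTop 0)).exists
    lift t to ℕ using ht
    exact ⟨t, hzero, hβ⟩

end TailProd

section Positivity

lemma genσ_one_mem : σ₁ ∈ sigmaNonneg 3 1 := genσ_mem_sigmaNonneg le_rfl (by norm_num) le_rfl

lemma genσ_two_mem : σ₂ ∈ sigmaNonneg 3 1 := genσ_mem_sigmaNonneg one_le_two le_rfl one_le_two

lemma inv_genσ_two_mem : σ₂⁻¹ ∈ sigmaNonneg 3 1 := inv_genσ_mem_sigmaNonneg le_rfl one_lt_two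

lemma inv_tailProd3_mul_δ₃_zpow_eq (c : ℤ → ℕ) {t : ℤ} (ht : -1 ≤ t) :
    (tailProd3 c t)⁻¹ * δ₃ ^ (t + 1) =
      (tailProd3 c (t - 1))⁻¹ * δ₃ ^ t * (σ₂ * σ₁ * σ₂⁻¹ ^ c t) := by
  rw [tailProd3_eq_mul c ht, g3_pow_eq_conj_σ₂, ← δ₃, zpow_add_one, inv_pow]
  group

lemma inv_tailProd3_neg_one_mem (c : ℤ → ℕ) : (tailProd3 c (-1))⁻¹ ∈ sigmaNonneg 3 1 := by
  rw [tailProd3_neg_one, ← inv_pow]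
  exact pow_mem inv_genσ_two_mem _

lemma sigmaPositive_inv_tailProd3_mul_δ₃_zpow (c : ℤ → ℕ) {t : ℤ} (ht : 0 ≤ t) :
    SigmaPositive 3 1 ((tailProd3 c t)⁻¹ * δ₃ ^ (t + 1)) := by
  have hstep (t : ℤ) (ht : 0 ≤ t)
      (hmem : (tailProd3 c (t - 1))⁻¹ * δ₃ ^ t ∈ sigmaNonneg 3 1) :
      SigmaPositive 3 1 ((tailProd3 c t)⁻¹ * δ₃ ^ (t + 1)) := by
    rw [inv_tailProd3_mul_δ₃_zpow_eq c (by omega), mul_assoc σ₂]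
    have hσ₁ : SigmaPositive 3 1 σ₁ := sigmaPositive_genσ le_rfl (by norm_num)
    exact .mem_mul hmem (.mem_mul genσ_two_mem (hσ₁.mul_mem (pow_mem inv_genσ_two_mem _)))
  induction t, ht using Int.leInduction with
  | base => exact hstep 0 le_rfl (by simpa using inv_tailProd3_neg_one_mem c)
  | succ t ht ih => exact hstep (t + 1) (by omega) (by simpa using ih.mem_sigmaNonneg)

/-- A code is gap-free if, above the index `0`, it has no zero entry directly below a nonzero one.
This is the only property of `<_right`-greatest codes that the comparison of braids requires. -/
def IsGapFree (c : ℤ → ℕ) : Prop :=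
  ∀ t : ℤ, 1 ≤ t → c (t + 1) ≠ 0 → c t ≠ 0

lemma IsGapFree.inv_δ₃_zpow_mul_tailProd3_mem {d : ℤ → ℕ} (hd : IsGapFree d) {t : ℤ} (ht : 0 ≤ t)
    (hdt : 1 ≤ t → d t ≠ 0) : (δ₃ ^ t)⁻¹ * tailProd3 d t ∈ sigmaNonneg 3 1 := by
  induction t, ht using Int.leInduction with
  | base =>
    rw [tailProd3_eq_mul d (by norm_num), zero_sub, tailProd3_neg_one, g3_of_emod_eq_zero rfl,
      zpow_zero, inv_one, one_mul]
    exact mul_mem (pow_mem genσ_one_mem _) (pow_mem genσ_two_mem _)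
  | succ t ht ih =>
    obtain ⟨k, hk⟩ := Nat.exists_eq_succ_of_ne_zero (hdt (by omega))
    have heq : (δ₃ ^ (t + 1))⁻¹ * tailProd3 d (t + 1) =
        σ₁ ^ k * σ₂⁻¹ * ((δ₃ ^ t)⁻¹ * tailProd3 d t) := by
      rw [tailProd3_eq_mul d (by omega), hk, g3_pow_succ_eq, add_sub_cancel_right]
      group
    rw [heq]
    exact mul_mem (mul_mem (pow_mem genσ_one_mem k) inv_genσ_two_mem)
      (ih fun h1 ↦ hd t h1 (hdt (by omega)))

lemma sigmaPositive_inv_tailProd3_mul_tailProd3 {c d : ℤ → ℕ} (hd : IsGapFree d) {l : ℤ}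
    (hl : 0 ≤ l) (hlt : c l < d l) : SigmaPositive 3 1 ((tailProd3 c l)⁻¹ * tailProd3 d l) := by
  obtain ⟨k, hk⟩ := Nat.exists_eq_add_of_lt hlt
  have hcancel : (tailProd3 c l)⁻¹ * tailProd3 d l =
      (tailProd3 c (l - 1))⁻¹ * g3 l ^ (k + 1) * tailProd3 d (l - 1) := by
    rw [tailProd3_eq_mul c (by omega), tailProd3_eq_mul d (by omega), hk, add_assoc, pow_add]
    group
  rw [hcancel]
  rcases hl.eq_or_lt with rfl | hl
  · have hσ₁ : SigmaPositive 3 1 σ₁ := sigmaPositive_genσ le_rfl (by norm_num)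
    rw [zero_sub, g3_of_emod_eq_zero rfl, pow_succ', tailProd3_neg_one d]
    exact .mul_mem (.mem_mul (inv_tailProd3_neg_one_mem c) (hσ₁.mul_mem (pow_mem genσ_one_mem k)))
      (pow_mem genσ_two_mem _)
  · have hlow := sigmaPositive_inv_tailProd3_mul_δ₃_zpow c (show 0 ≤ l - 1 by omega)
    have hhigh : (δ₃ ^ (l - 1))⁻¹ * tailProd3 d (l - 1) ∈ sigmaNonneg 3 1 :=
      hd.inv_δ₃_zpow_mul_tailProd3_mem (by omega) fun h1 ↦
        hd (l - 1) h1 (by rw [sub_add_cancel]; omega)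
    rw [sub_add_cancel] at hlow
    rw [g3_pow_succ_eq]
    simpa only [mul_assoc] using (hlow.mul_mem
      (mul_mem (pow_mem genσ_one_mem k) inv_genσ_two_mem)).mul_mem hhigh

lemma sigmaPositive_inv_tailProd3_neg_one_mul {c d : ℤ → ℕ} (hlt : c (-1) < d (-1)) :
    SigmaPositive 3 2 ((tailProd3 c (-1))⁻¹ * tailProd3 d (-1)) := by
  obtain ⟨k, hk⟩ := Nat.exists_eq_add_of_lt hlt
  have hσ₂ : SigmaPositive 3 2 σ₂ := sigmaPositive_genσ one_le_two le_rfl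
  have : (tailProd3 c (-1))⁻¹ * tailProd3 d (-1) = σ₂ * σ₂ ^ k := by
    rw [tailProd3_neg_one, tailProd3_neg_one, hk]
    group
  rw [this]
  exact hσ₂.mul_mem (pow_mem hσ₂.mem_sigmaNonneg k)

end Positivity

section Codes

variable {α β : Braid 3} {c d : ℤ → ℕ}

lemma IsCode3.inv_mul_eq (hα : IsCode3 α c) (hβ : IsCode3 β d) {l : ℤ}
    (h : ∀ t, l < t → c t = d t) : α⁻¹ * β = (tailProd3 c l)⁻¹ * tailProd3 d l := by
  obtain ⟨t, ⟨⟨-, rfl⟩, -, rfl⟩, ht⟩ := (((isCode3_iff_eventually.mp hα).2.and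
    (isCode3_iff_eventually.mp hβ).2).and (eventually_ge_atTop l)).exists
  exact inv_tailProd3_mul_tailProd3_of_eq_above h ht

lemma IsCode3.unique (hα : IsCode3 α c) (hβ : IsCode3 β c) : α = β :=
  inv_mul_eq_one.mp <| (hα.inv_mul_eq hβ (l := 0) fun _ _ ↦ rfl).trans (inv_mul_cancel _)

lemma IsCode3.eventually_eq_zero (hα : IsCode3 α c) : c =ᶠ[atTop] 0 := by
  obtain ⟨-, m, hm, -⟩ := hα
  exact (eventually_gt_atTop (m : ℤ)).mono hm

lemma IsCode3.of_eq_above (hα : IsCode3 α c) (hd : ∀ t < -1, d t = 0) {l : ℤ}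
    (h : ∀ t, l < t → c t = d t) (hl : tailProd3 c l = tailProd3 d l) : IsCode3 α d := by
  rw [isCode3_iff_eventually] at hα ⊢
  refine ⟨hd, ?_⟩
  filter_upwards [hα.2, eventually_ge_atTop l] with t ⟨hzero, ht⟩ hlt
  refine ⟨fun s hs ↦ (h s (hlt.trans_lt hs)) ▸ hzero s hs, ?_⟩
  have hquot := inv_tailProd3_mul_tailProd3_of_eq_above h hlt
  rwa [hl, inv_mul_cancel, inv_mul_eq_one, ← ht] at hquot

/-- The code obtained from a code `c` with `c t = 0` by moving one letter `g_{t+1}` to the right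
past the letters `g_{t-1}`, which become `g_t`, and counting it as a letter `g_{t-2} = g_{t+1}`. -/
def slide (c : ℤ → ℕ) (t : ℤ) : ℤ → ℕ := fun s ↦
  if s = t + 1 then c (t + 1) - 1 else if s = t then c (t - 1) else if s = t - 1 then 0
  else if s = t - 2 then c (t - 2) + 1 else c s

lemma slide_of_gt (c : ℤ → ℕ) {s t : ℤ} (h : t + 1 < s) : slide c t s = c s := by
  unfold slide
  split_ifs <;> omega

lemma slide_of_lt (c : ℤ → ℕ) {s t : ℤ} (h : s < t - 2) : slide c t s = c s := by
  unfold slide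
  split_ifs <;> omega

lemma slide_sub_two (c : ℤ → ℕ) (t : ℤ) : slide c t (t - 2) = c (t - 2) + 1 := by
  unfold slide
  split_ifs <;> omega

lemma tailProd3_slide {t : ℤ} (ht : 1 ≤ t) (hzero : c t = 0) (hpos : c (t + 1) ≠ 0) :
    tailProd3 (slide c t) (t + 1) = tailProd3 c (t + 1) := by
  have hexpand (c : ℤ → ℕ) : tailProd3 c (t + 1) = g3 (t + 1) ^ c (t + 1) *
      (g3 t ^ c t * (g3 (t - 1) ^ c (t - 1) * (g3 (t - 2) ^ c (t - 2) * tailProd3 c (t - 3)))) := by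
    rw [tailProd3_eq_mul c (by omega), add_sub_cancel_right, tailProd3_eq_mul c (by omega),
      tailProd3_eq_mul c (by omega), tailProd3_eq_mul c (by omega)]
    ring_nf
  obtain ⟨k, hk⟩ : ∃ k, c (t + 1) = k + 1 := Nat.exists_eq_succ_of_ne_zero hpos
  have htail : tailProd3 (slide c t) (t - 3) = tailProd3 c (t - 3) :=
    tailProd3_congr fun s hs ↦ slide_of_lt c (by omega)
  have hcomm : g3 (t + 1) * g3 (t - 1) ^ c (t - 1) = g3 t ^ c (t - 1) * g3 (t + 1) := by
    have h : SemiconjBy (g3 (t - 1 + 2)) (g3 (t - 1)) (g3 (t - 1 + 1)) := g3_add_two_mul_g3 (t - 1)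
    rw [sub_add_cancel, show t - 1 + 2 = t + 1 by ring] at h
    exact (h.pow_right _).eq
  have hperiod : g3 (t - 2) = g3 (t + 1) := by rw [← g3_add_three]; ring_nf
  have hslide : slide c t (t + 1) = k ∧ slide c t t = c (t - 1) ∧ slide c t (t - 1) = 0 := by
    refine ⟨?_, ?_, ?_⟩ <;> unfold slide <;> split_ifs <;> omega
  rw [hexpand, hexpand, htail, slide_sub_two, hslide.1, hslide.2.1, hslide.2.2, hzero, hk, hperiod]
  calc g3 (t + 1) ^ k * (g3 t ^ c (t - 1) * (g3 (t - 1) ^ 0 *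
        (g3 (t + 1) ^ (c (t - 2) + 1) * tailProd3 c (t - 3))))
      = g3 (t + 1) ^ k * (g3 t ^ c (t - 1) * g3 (t + 1)) *
          g3 (t + 1) ^ c (t - 2) * tailProd3 c (t - 3) := by
        rw [pow_succ' _ (c (t - 2))]; group
    _ = _ := by rw [← hcomm]; group

lemma IsGreatestCode3.isGapFree (h : IsGreatestCode3 β c) : IsGapFree c := by
  intro t ht hpos hzero
  have hcode : IsCode3 β (slide c t) :=
    h.1.of_eq_above (fun s hs ↦ by rw [slide_of_lt c (by omega), h.1.1 s hs])
      (fun s hs ↦ (slide_of_gt c hs).symm) (tailProd3_slide ht hzero hpos).symm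
  have hlarger : c (t - 2) < slide c t (t - 2) := (slide_sub_two c t).symm ▸ Nat.lt_succ_self _
  have hne : slide c t ≠ c := fun heq ↦ hlarger.ne (congrFun heq (t - 2)).symm
  obtain ⟨l, hl, hlow⟩ := h.2 _ hcode hne
  rcases lt_trichotomy l (t - 2) with hlt | rfl | hgt
  · exact hl.ne (slide_of_lt c hlt)
  · exact hl.asymm hlarger
  · exact hlarger.ne' (hlow _ hgt)

lemma codeLtLeft_trichotomy (h : c =ᶠ[atTop] d) : c = d ∨ codeLtLeft c d ∨ codeLtLeft d c := by
  rw [or_iff_not_imp_left]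
  intro hne
  obtain ⟨N, hN⟩ := eventually_atTop.mp h
  obtain ⟨l, hl, hmax⟩ := Int.exists_greatest_of_bdd (P := fun t ↦ c t ≠ d t)
    ⟨N, fun t ht ↦ le_of_not_ge fun hle ↦ ht (hN t hle)⟩ (Function.ne_iff.mp hne)
  have habove (t : ℤ) (ht : l < t) : c t = d t := not_not.mp fun h ↦ ht.not_ge (hmax t h)
  exact hl.lt_or_gt.imp (⟨l, ·, habove⟩) (⟨l, ·, fun t ht ↦ (habove t ht).symm⟩)

lemma dehornoyLt_of_codeLtLeft (hα : IsCode3 α c) (hβ : IsCode3 β d) (hd : IsGapFree d)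
    (h : codeLtLeft c d) : dehornoyLt 3 α β := by
  obtain ⟨l, hlt, habove⟩ := h
  have hl : -1 ≤ l := le_of_not_gt fun hl ↦ by simp [hβ.1 l hl] at hlt
  have hquot := hα.inv_mul_eq hβ habove
  rcases hl.eq_or_lt with rfl | hl
  · exact ⟨2, one_le_two, le_rfl, hquot ▸ sigmaPositive_inv_tailProd3_neg_one_mul hlt⟩
  · exact ⟨1, le_rfl, one_le_two, hquot ▸ sigmaPositive_inv_tailProd3_mul_tailProd3 hd hl hlt⟩

end Codes

/-- Theorem: for `α, β ∈ B_3^{+*}`, `α <_D β` holds iff `C(α) <_left C(β)`, where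
`C(α)`, `C(β)` are the `<_right`-greatest codes of `α` and `β`. -/
theorem dehornoyLt_iff_codeLtLeft (α β : Braid 3)
    (hα : α ∈ dualMonoid 3) (hβ : β ∈ dualMonoid 3)
    (cα cβ : ℤ → ℕ) (hcα : IsGreatestCode3 α cα) (hcβ : IsGreatestCode3 β cβ) :
    dehornoyLt 3 α β ↔ codeLtLeft cα cβ := by
  refine ⟨fun hlt ↦ ?_, dehornoyLt_of_codeLtLeft hcα.1 hcβ.1 hcβ.isGapFree⟩
  have htop : cα =ᶠ[atTop] cβ := hcα.1.eventually_eq_zero.trans hcβ.1.eventually_eq_zero.symm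
  rcases codeLtLeft_trichotomy htop with rfl | hleft | hleft
  · obtain rfl : α = β := hcα.1.unique hcβ.1
    exact absurd hlt (dehornoyLt_asymm hlt)
  · exact hleft
  · exact absurd (dehornoyLt_of_codeLtLeft hcβ.1 hcα.1 hcα.isGapFree hleft) (dehornoyLt_asymm hlt)
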